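/- Let 0<p<∞, let ω be a weight on [0,1) with ω∈𝒟, and suppose C₀>0 and α>0 are constants such that ω̂(t) ≤ C₀·((1−t)/(1−r))^α·ω̂(r) for all 0 ≤ r ≤ t < 1, and let κ>−α. Then there exists a constant C≥1, depending only on n, p, κ, ω (and not on f), such that for every holomorphic function f:𝔹→ℂ, C⁻¹·∫_𝔹 |f(z)|^p (1−|z|)^{κ−1} ω̂(|z|) dV(z) ≤ ∫_𝔹 |f(z)|^p (1−|z|)^κ ω(|z|) dV(z) ≤ C·∫_𝔹 |f(z)|^p (1−|z|)^{κ−1} ω̂(|z|) dV(z). -/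

import Mathlib

/-!
Both integrals have the form `∫_𝔹 |f|^p g(|z|) dV` with a radial `g`: either `(1 - r)^κ ω(r)` or
`(1 - r)^(κ-1) ω̂(r)`. In polar coordinates, and after averaging over the rotations
`z ↦ e^{iθ} z`, such an integral becomes an integral over `ζ` in the unit sphere of
`∫_0^1 g(r) Φ_ζ(r) dr`, where `Φ_ζ(r)` is `r^(2n-1)` times `2π` times the mean of `|f(wζ)|^p` over
the circle `|w| = r` (`lintegral_ball_eq`). The function `Φ_ζ` is nondecreasing, because the
circle means of `|h|^p` are nondecreasing in the radius for holomorphic `h`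
(`circleAverage_norm_rpow_mono`, which rests on the sub-mean value property
`norm_rpow_le_circleAverage` obtained from Jensen's formula).

By the layer cake formula, comparing `∫ g₁ Φ` with `∫ g₂ Φ` for all nonnegative nondecreasing `Φ`
amounts to comparing the tails `∫_s^1 g₁` and `∫_s^1 g₂` (`setLIntegral_le_of_mono_tail`).
The theorem thus reduces to a statement about the weight alone: the tails of both radial densities
are comparable, with constants independent of `s` (`tail_comparable`). Put
`X(s) = (1 - s)^κ ω̂(s)`, and let `M1(s)`, `M2(s)` be the tails of `(1 - r)^κ ω` and
`(1 - r)^(κ-1) ω̂`. The decay hypothesis on `ω̂` and `κ > -α` give `M2 ≲ X`; membership in `𝒟̌`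
puts a fixed fraction of the mass of `ω` on `(s,1)` into a part where `1 - r` is comparable to
`1 - s`, so `X ≲ M1`; membership in `𝒟̂` gives `X ≲ M2`; and integrating by parts gives
`M1 ≤ X + |κ| M2`.
-/

open MeasureTheory Metric Filter

noncomputable section

/-- A weight on `[0,1)`: a non-negative, measurable, integrable function. -/
def IsWeight (ω : ℝ → ℝ) : Prop :=
  (∀ r ∈ Set.Ico (0:ℝ) 1, 0 ≤ ω r) ∧ Measurable ω ∧ IntegrableOn ω (Set.Ico 0 1)

/-- `ω̂(r) = ∫_r^1 ω(t) dt`. -/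
def wh (ω : ℝ → ℝ) (r : ℝ) : ℝ := ∫ t in Set.Ioo r 1, ω t

/-- The class `Dhat` of upper doubling weights. -/
def DHat (ω : ℝ → ℝ) : Prop :=
  ∃ C : ℝ, 1 ≤ C ∧ ∀ r ∈ Set.Ico (0:ℝ) 1, wh ω r ≤ C * wh ω ((1 + r) / 2)

/-- The class `Dcheck`: there exist `C, K > 1` with `ω̂(r) ≥ C·ω̂(1-(1-r)/K)`. -/
def DCheck (ω : ℝ → ℝ) : Prop :=
  ∃ C K : ℝ, 1 < C ∧ 1 < K ∧ ∀ r ∈ Set.Ico (0:ℝ) 1,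
    C * wh ω (1 - (1 - r) / K) ≤ wh ω r

/-- `D = Dhat ∩ Dcheck`. -/
def DD (ω : ℝ → ℝ) : Prop := DHat ω ∧ DCheck ω

/-- `ℂⁿ`. -/
abbrev En (n : ℕ) := EuclideanSpace ℂ (Fin n)

instance (n : ℕ) : MeasurableSpace (En n) := borel _
instance (n : ℕ) : BorelSpace (En n) := ⟨rfl⟩

/-- The normalized volume measure on `ℂⁿ`, giving the unit ball measure `1`. -/
def nV (n : ℕ) : Measure (En n) := (volume (ball (0 : En n) 1))⁻¹ • volume

/-- The open unit ball `the unit ball` of `ℂⁿ`. -/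
def Bl (n : ℕ) : Set (En n) := ball 0 1

/-! ### Circle means of `|h|^p` -/

/-- Sub-mean value property of `|h|^p` for holomorphic `h`. Jensen's formula gives it for `log |h|`;
it passes to `|h|^p = exp (p log |h|)` through the tangent line of `exp` at `p log |h c|`. -/
lemma norm_rpow_le_circleAverage {h : ℂ → ℂ} {c : ℂ} {R p : ℝ} (hR : 0 < R) (hp : 0 < p)
    (hh : AnalyticOnNhd ℂ h (closedBall c R)) :
    ‖h c‖ ^ p ≤ Real.circleAverage (fun z => ‖h z‖ ^ p) c R := by
  have hRa : |R| = R := abs_of_pos hR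
  by_cases hc : h c = 0
  · rw [hc, norm_zero, Real.zero_rpow hp.ne']
    exact Real.circleAverage_nonneg_of_nonneg fun z _ => by positivity
  have hlog : Real.log ‖h c‖ ≤ Real.circleAverage (fun z => Real.log ‖h z‖) c R := by
    have hJ := AnalyticOnNhd.circleAverage_log_norm hR.ne' (by rwa [hRa]) hc
    rw [hJ, le_add_iff_nonneg_left]
    refine finsum_nonneg fun u => ?_
    by_cases hu : u ∈ closedBall c |R|
    · refine mul_nonneg ?_ ?_
      · exact_mod_cast MeromorphicOn.AnalyticOnNhd.divisor_nonneg (f := h) (U := closedBall c |R|) (by rwa [hRa]) u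
      · by_cases hcu : c = u
        · simp [hcu]
        refine Real.log_nonneg ?_
        have h1 : 0 < ‖c - u‖ := norm_pos_iff.2 (sub_ne_zero.2 hcu)
        rw [← div_eq_mul_inv, one_le_div h1]
        rw [mem_closedBall, dist_comm, dist_eq_norm, hRa] at hu
        exact hu
    · rw [Function.locallyFinsuppWithin.apply_eq_zero_of_notMem _ hu]
      simp
  set a := Real.log ‖h c‖ with ha
  -- `T` is the tangent-line minorant of `|h|^p`; it needs `h z ≠ 0`, as `Real.log 0 = 0`.
  set T : ℂ → ℝ := fun z => ‖h c‖ ^ p * (1 + (p * Real.log ‖h z‖ - p * a)) with hT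
  set U : ℂ → ℝ := fun z => ‖h z‖ ^ p with hU
  have hpre : h ⁻¹' {0}ᶜ ∈ codiscreteWithin (sphere c |R|) := by
    have h1 := hh.preimage_zero_mem_codiscreteWithin hc (mem_closedBall_self hR.le)
      ⟨⟨c, mem_closedBall_self hR.le⟩, (convex_closedBall c R).isPreconnected⟩
    exact codiscreteWithin_mono (by rw [hRa]; exact sphere_subset_closedBall) h1
  classical
  have hEq : U =ᶠ[codiscreteWithin (sphere c |R|)] fun z => if h z = 0 then T z else U z := by
    filter_upwards [hpre] with z hz
    have : h z ≠ 0 := by simpa using hz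
    simp [this]
  have hUint : CircleIntegrable U c R := by
    refine ContinuousOn.circleIntegrable hR.le ?_
    exact ((hh.continuousOn.mono sphere_subset_closedBall).norm).rpow_const
      fun _ _ => Or.inr hp.le
  have hLint : CircleIntegrable (fun z => Real.log ‖h z‖) c R :=
    MeromorphicOn.circleIntegrable_log_norm
      fun z hz => (hh z (by rw [hRa] at hz; exact sphere_subset_closedBall hz)).meromorphicAt
  have hTint : CircleIntegrable T c R := by
    have h1 : CircleIntegrable (fun z => p * Real.log ‖h z‖) c R := hLint.const_mul p
    have h2 : IntervalIntegrable (fun θ : ℝ => ‖h c‖ ^ p *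
        (1 + (p * Real.log ‖h (circleMap c R θ)‖ - p * a))) volume 0 (2 * Real.pi) :=
      ((intervalIntegrable_const).add (IntervalIntegrable.sub h1 intervalIntegrable_const)).const_mul _
    exact h2
  have hTavg : ‖h c‖ ^ p ≤ Real.circleAverage T c R := by
    have h3 : Real.circleAverage T c R =
        ‖h c‖ ^ p * (1 + (p * Real.circleAverage (fun z => Real.log ‖h z‖) c R - p * a)) := by
      simp only [Real.circleAverage_def, hT, smul_eq_mul]
      have h1 : IntervalIntegrable (fun θ : ℝ => p * Real.log ‖h (circleMap c R θ)‖)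
        volume 0 (2 * Real.pi) := IntervalIntegrable.const_mul hLint p
      rw [intervalIntegral.integral_const_mul, intervalIntegral.integral_add intervalIntegrable_const
        (h1.sub intervalIntegrable_const), intervalIntegral.integral_sub h1 intervalIntegrable_const,
        intervalIntegral.integral_const_mul]
      simp
      have := Real.pi_pos
      field_simp
    rw [h3]
    have : 0 ≤ ‖h c‖ ^ p := by positivity
    nlinarith [mul_nonneg this (mul_nonneg hp.le (sub_nonneg.2 hlog))]
  refine hTavg.trans ?_
  rw [Real.circleAverage_congr_codiscreteWithin hEq hR.ne']
  refine Real.circleAverage_mono hTint (hUint.congr_codiscreteWithin hEq) fun z _ => ?_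
  by_cases hz : h z = 0
  · simp [hz]
  · simp only [hz, if_false, hT, hU]
    have e1 : ‖h z‖ ^ p = ‖h c‖ ^ p * Real.exp (p * Real.log ‖h z‖ - p * a) := by
      rw [Real.rpow_def_of_pos (norm_pos_iff.2 hz), Real.rpow_def_of_pos (norm_pos_iff.2 hc),
        ← Real.exp_add]
      congr 1; ring
    rw [e1]
    refine mul_le_mul_of_nonneg_left ?_ (by positivity)
    linarith [Real.add_one_le_exp (p * Real.log ‖h z‖ - p * a)]

/-- The circle means of `|h|^p` are nondecreasing in the radius. The rotation average
`z ↦ m |z|` of `|h|^p` inherits its sub-mean value property, so by the maximum principle `m` attains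
its maximum over `[0, s]` at `s`. -/
lemma circleAverage_norm_rpow_mono {h : ℂ → ℂ} {p : ℝ} (hp : 0 < p)
    (hh : DifferentiableOn ℂ h (ball 0 1)) {r s : ℝ} (hr : 0 ≤ r) (hrs : r ≤ s) (hs : s < 1) :
    Real.circleAverage (fun z => ‖h z‖ ^ p) 0 r ≤ Real.circleAverage (fun z => ‖h z‖ ^ p) 0 s := by
  set U : ℂ → ℝ := fun z => ‖h z‖ ^ p with hU
  have hUc : ContinuousOn U (ball 0 1) := hh.continuousOn.norm.rpow_const fun _ _ => Or.inr hp.le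
  set m : ℝ → ℝ := Real.circleAverage U 0 with hm
  have hmc : ContinuousOn m (Set.Icc 0 s) := by
    refine Real.ContinuousOn.circleAverage (hUc.mono ?_) fun r hr => hr.1
    intro z hz
    have : ‖z - 0‖ ∈ Set.Icc 0 s := hz
    rw [sub_zero] at this
    simpa using this.2.trans_lt hs
  have hrot : ∀ z : ℂ, m ‖z‖ = (2 * Real.pi)⁻¹ * ∫ θ in 0..2 * Real.pi, U (z * circleMap 0 1 θ) := by
    intro z
    rw [hm, Real.circleAverage_eq_integral_add z.arg, smul_eq_mul]
    congr 2
    ext θ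
    congr 1
    conv_rhs => rw [← Complex.norm_mul_exp_arg_mul_I z]
    simp only [circleMap, zero_add, Complex.ofReal_one, one_mul, mul_assoc, ← Complex.exp_add]
    push_cast
    ring_nf
  have hsub : ∀ r ρ : ℝ, 0 ≤ r → 0 < ρ → r + ρ < 1 →
      m r ≤ (2 * Real.pi)⁻¹ * ∫ φ in 0..2 * Real.pi, m ‖circleMap (r : ℂ) ρ φ‖ := by
    intro r ρ hr hρ hrρ
    have hnorm : ∀ φ, ‖circleMap (r : ℂ) ρ φ‖ < 1 := by
      intro φ
      refine lt_of_le_of_lt ?_ hrρ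
      have := norm_circleMap_zero ρ φ
      calc ‖circleMap (r : ℂ) ρ φ‖ = ‖(r : ℂ) + circleMap 0 ρ φ‖ := by simp [circleMap]
        _ ≤ ‖(r : ℂ)‖ + ‖circleMap 0 ρ φ‖ := norm_add_le _ _
        _ = r + ρ := by simp [abs_of_nonneg hr, abs_of_pos hρ]
    have hmem : ∀ φ θ, circleMap (r : ℂ) ρ φ * circleMap 0 1 θ ∈ ball (0 : ℂ) 1 := by
      intro φ θ
      simpa using hnorm φ
    have hcont : Continuous (fun q : ℝ × ℝ => U (circleMap (r : ℂ) ρ q.2 * circleMap 0 1 q.1)) :=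
      hUc.comp_continuous (by fun_prop) fun q => hmem _ _
    have hcont' : Continuous (fun θ : ℝ => ∫ φ in 0..2 * Real.pi,
        U (circleMap (r : ℂ) ρ φ * circleMap 0 1 θ)) :=
      intervalIntegral.continuous_parametric_intervalIntegral_of_continuous' hcont _ _
    have h1 : ∀ θ : ℝ, U (r * circleMap 0 1 θ) ≤
        (2 * Real.pi)⁻¹ * ∫ φ in 0..2 * Real.pi, U (circleMap (r : ℂ) ρ φ * circleMap 0 1 θ) := by
      intro θ
      have hd : DifferentiableOn ℂ (fun w => h (w * circleMap 0 1 θ)) (ball 0 1) :=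
        hh.comp (by fun_prop) fun w hw => by simpa using hw
      have := norm_rpow_le_circleAverage (h := fun w => h (w * circleMap 0 1 θ)) (c := r) hρ hp
        ((hd.analyticOnNhd isOpen_ball).mono fun w hw => ?_)
      · simpa [Real.circleAverage_def, hU] using this
      · rw [mem_closedBall, dist_eq_norm] at hw
        have h2 := norm_le_norm_add_norm_sub' w (r : ℂ)
        rw [Complex.norm_real, Real.norm_of_nonneg hr] at h2
        rw [mem_ball_zero_iff]; linarith
    have hr' : m r = m ‖(r : ℂ)‖ := by rw [Complex.norm_real, Real.norm_of_nonneg hr]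
    have hpi := Real.pi_pos
    rw [hr', hrot]
    refine mul_le_mul_of_nonneg_left ?_ (by positivity)
    calc ∫ θ in 0..2 * Real.pi, U (r * circleMap 0 1 θ)
        ≤ ∫ θ in 0..2 * Real.pi, (2 * Real.pi)⁻¹ *
          ∫ φ in 0..2 * Real.pi, U (circleMap (r : ℂ) ρ φ * circleMap 0 1 θ) := by
          refine intervalIntegral.integral_mono_on (by positivity) ?_ ?_ fun θ _ => h1 θ
          · refine Continuous.intervalIntegrable ?_ _ _
            refine hUc.comp_continuous (by fun_prop) fun q => ?_
            simp [abs_of_nonneg hr]; linarith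
          · exact (continuous_const.mul hcont').intervalIntegrable _ _
      _ = ∫ φ in 0..2 * Real.pi, m ‖circleMap (r : ℂ) ρ φ‖ := by
          simp_rw [hrot]
          rw [intervalIntegral.integral_const_mul, intervalIntegral.integral_const_mul]
          congr 1
          simp only [intervalIntegral.integral_of_le (by positivity : (0:ℝ) ≤ 2 * Real.pi)]
          refine integral_integral_swap ?_
          rw [Measure.prod_restrict]
          refine IntegrableOn.mono_set (t := Set.Icc 0 (2*Real.pi) ×ˢ Set.Icc 0 (2*Real.pi)) ?_
            (Set.prod_mono Set.Ioc_subset_Icc_self Set.Ioc_subset_Icc_self)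
          exact hcont.continuousOn.integrableOn_compact (isCompact_Icc.prod isCompact_Icc)
  -- Let `y` be the last point of `[0, s]` where `m` is maximal. If `y < s`, the circle about `y` of
  -- radius `s - y` touches `|z| = s`, where `m` is strictly smaller.
  have hs0 : 0 ≤ s := hr.trans hrs
  obtain ⟨x, hx, hxmax⟩ := isCompact_Icc.exists_isMaxOn (Set.nonempty_Icc.2 hs0) hmc
  have hK : IsCompact (Set.Icc 0 s ∩ m ⁻¹' {m x}) :=
    isCompact_Icc.of_isClosed_subset (hmc.preimage_isClosed_of_isClosed isClosed_Icc isClosed_singleton)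
      Set.inter_subset_left
  obtain ⟨y, ⟨hy, hyx⟩, hyg⟩ := hK.exists_isGreatest ⟨x, hx, rfl⟩
  have hyx : m y = m x := hyx
  rcases hy.2.lt_or_eq with hlt | rfl
  swap
  · rw [hyx]; exact hxmax ⟨hr, hrs⟩
  exfalso
  have hlt' : m s < m x := by
    refine lt_of_le_of_ne (hxmax ⟨hs0, le_rfl⟩) fun he => ?_
    exact absurd (hyg ⟨⟨hs0, le_rfl⟩, he⟩) (not_le.2 hlt)
  have hρ : 0 < s - y := by linarith
  have hb : ∀ φ, ‖circleMap (y : ℂ) (s - y) φ‖ ∈ Set.Icc 0 s := by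
    intro φ
    refine ⟨norm_nonneg _, ?_⟩
    calc ‖circleMap (y : ℂ) (s - y) φ‖ = ‖(y : ℂ) + circleMap 0 (s - y) φ‖ := by simp [circleMap]
        _ ≤ ‖(y : ℂ)‖ + ‖circleMap 0 (s - y) φ‖ := norm_add_le _ _
        _ = y + (s - y) := by
          rw [norm_circleMap_zero, Complex.norm_real, Real.norm_of_nonneg hy.1, abs_of_pos hρ]
        _ = s := by ring
  have hlt2 : ∫ φ in 0..2 * Real.pi, m ‖circleMap (y : ℂ) (s - y) φ‖ <
      ∫ φ in 0..2 * Real.pi, m x := by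
    refine intervalIntegral.integral_lt_integral_of_continuousOn_of_le_of_exists_lt
      Real.two_pi_pos ?_ continuousOn_const (fun φ _ => hxmax (hb φ)) ⟨0, ?_, ?_⟩
    · exact hmc.comp (by fun_prop) fun φ _ => hb φ
    · exact ⟨le_rfl, Real.two_pi_pos.le⟩
    · have : circleMap (y : ℂ) (s - y) 0 = (s : ℂ) := by simp [circleMap]
      rwa [this, Complex.norm_real, Real.norm_of_nonneg hs0]
  have h3 := hsub y (s - y) hy.1 hρ (by linarith)
  have hpi := Real.pi_pos
  rw [intervalIntegral.integral_const, sub_zero, smul_eq_mul] at hlt2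
  have h4 := mul_lt_mul_of_pos_left hlt2 (by positivity : 0 < (2 * Real.pi)⁻¹)
  rw [← mul_assoc, inv_mul_cancel₀ (by positivity), one_mul] at h4
  linarith

/-! ### Integrals against monotone functions -/

/-- Tail domination of `g₁` by `g₂` implies domination of the integrals against any nonnegative
nondecreasing `Φ`: each superlevel set of `Φ` is, up to a null set, an interval `(s, 1)`. -/
lemma setLIntegral_le_of_mono_tail {g₁ g₂ : ℝ → ENNReal} {C : ENNReal}
    (hg : ∀ s ∈ Set.Ico (0:ℝ) 1, ∫⁻ r in Set.Ioo s 1, g₁ r ≤ C * ∫⁻ r in Set.Ioo s 1, g₂ r)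
    {Φ : ℝ → ℝ} (hΦ0 : ∀ r ∈ Set.Ioo (0:ℝ) 1, 0 ≤ Φ r) (hΦ : MonotoneOn Φ (Set.Ioo 0 1))
    (hC : C ≠ ⊤) (hg₁ : Measurable g₁) (hg₂ : Measurable g₂) :
    ∫⁻ r in Set.Ioo 0 1, g₁ r * ENNReal.ofReal (Φ r) ≤
      C * ∫⁻ r in Set.Ioo 0 1, g₂ r * ENNReal.ofReal (Φ r) := by
  have hΦm : AEMeasurable Φ (volume.restrict (Set.Ioo 0 1)) :=
    aemeasurable_restrict_of_monotoneOn measurableSet_Ioo hΦ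
  have key : ∀ g : ℝ → ENNReal, Measurable g →
      ∫⁻ r in Set.Ioo 0 1, g r * ENNReal.ofReal (Φ r) =
        ∫⁻ t in Set.Ioi (0:ℝ), ∫⁻ r in Set.Ioo 0 1 ∩ {r | t < Φ r}, g r := by
    intro g hgm
    set μ := (volume.restrict (Set.Ioo (0:ℝ) 1)).withDensity g
    have hac : μ ≪ volume.restrict (Set.Ioo (0:ℝ) 1) := withDensity_absolutelyContinuous _ _
    have h1 := lintegral_withDensity_eq_lintegral_mul₀ (μ := volume.restrict (Set.Ioo (0:ℝ) 1))
      hgm.aemeasurable hΦm.ennreal_ofReal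
    simp only [Pi.mul_apply] at h1
    rw [← h1, lintegral_eq_lintegral_meas_lt]
    · refine lintegral_congr fun t => ?_
      have hms : NullMeasurableSet {a | t < Φ a} (volume.restrict (Set.Ioo (0:ℝ) 1)) :=
        nullMeasurableSet_lt aemeasurable_const hΦm
      rw [withDensity_apply', Measure.restrict_restrict₀ hms, Set.inter_comm]
    · exact hac.ae_le ((ae_restrict_iff' measurableSet_Ioo).2 (ae_of_all _ hΦ0))
    · exact hΦm.mono_ac hac
  rw [key g₁ hg₁, key g₂ hg₂, ← lintegral_const_mul' _ _ hC]
  refine lintegral_mono fun t => ?_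
  set S := Set.Ioo (0:ℝ) 1 ∩ {r | t < Φ r} with hS
  rcases S.eq_empty_or_nonempty with he | ⟨x₀, hx₀⟩
  · simp [he]
  have hbdd : BddBelow S := ⟨0, fun x hx => hx.1.1.le⟩
  have hs : sInf S ∈ Set.Ico (0:ℝ) 1 :=
    ⟨le_csInf ⟨x₀, hx₀⟩ fun x hx => hx.1.1.le, (csInf_le hbdd hx₀).trans_lt hx₀.1.2⟩
  have hsub1 : Set.Ioo (sInf S) 1 ⊆ S := by
    intro x hx
    obtain ⟨y, hy, hyx⟩ := (csInf_lt_iff hbdd ⟨x₀, hx₀⟩).1 hx.1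
    have hx01 : x ∈ Set.Ioo (0:ℝ) 1 := ⟨hs.1.trans_lt hx.1, hx.2⟩
    exact ⟨hx01, lt_of_lt_of_le hy.2 (hΦ hy.1 hx01 hyx.le)⟩
  have hsub2 : S ⊆ Set.Icc (sInf S) 1 := fun x hx => ⟨csInf_le hbdd hx, hx.1.2.le⟩
  have hae : S =ᵐ[volume] Set.Ioo (sInf S) 1 :=
    (hsub2.eventuallyLE.trans Ioo_ae_eq_Icc.symm.le).antisymm hsub1.eventuallyLE
  rw [setLIntegral_congr hae, setLIntegral_congr hae]
  exact hg _ hs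

/-! ### Tail integrals of the weight -/

/-- The tail `∫_r^1 ω` as a lower Lebesgue integral. For a weight and `0 ≤ r` it equals `wh ω r`;
unlike `wh ω`, it is antitone on all of `ℝ`, hence measurable. -/
def tailW (ω : ℝ → ℝ) (r : ℝ) : ENNReal := ∫⁻ t in Set.Ioo r 1, ENNReal.ofReal (ω t)

lemma antitone_tailW (ω : ℝ → ℝ) : Antitone (tailW ω) := fun _ _ h =>
  lintegral_mono_set (Set.Ioo_subset_Ioo_left h)

lemma IsWeight.ofReal_wh {ω : ℝ → ℝ} (hω : IsWeight ω) {r : ℝ} (hr : 0 ≤ r) :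
    ENNReal.ofReal (wh ω r) = tailW ω r := by
  have hsub : Set.Ioo r 1 ⊆ Set.Ico 0 1 := fun x hx => ⟨hr.trans hx.1.le, hx.2⟩
  exact ofReal_integral_eq_lintegral_ofReal (hω.2.2.mono_set hsub)
    ((ae_restrict_iff' measurableSet_Ioo).2 (ae_of_all _ fun x hx => hω.1 x (hsub hx)))

lemma IsWeight.wh_nonneg {ω : ℝ → ℝ} (hω : IsWeight ω) {r : ℝ} (hr : 0 ≤ r) : 0 ≤ wh ω r :=
  setIntegral_nonneg measurableSet_Ioo fun x hx => hω.1 x ⟨hr.trans hx.1.le, hx.2⟩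

lemma rpow_ge_of_mem {K x y a : ℝ} (hK : 1 ≤ K) (hy : 0 < y) (h1 : y / K ≤ x) (h2 : x ≤ y) :
    K ^ (-|a|) * y ^ a ≤ x ^ a := by
  have hK0 : 0 < K := by linarith
  have hx : 0 < x := lt_of_lt_of_le (by positivity) h1
  rcases le_total 0 a with ha | ha
  · rw [abs_of_nonneg ha]
    calc K ^ (-a) * y ^ a = (y / K) ^ a := by
          rw [Real.div_rpow hy.le hK0.le, Real.rpow_neg hK0.le]; field_simp
      _ ≤ x ^ a := Real.rpow_le_rpow (by positivity) h1 ha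
  · rw [abs_of_nonpos ha, neg_neg]
    calc K ^ a * y ^ a ≤ 1 * y ^ a := by
          gcongr; exact Real.rpow_le_one_of_one_le_of_nonpos hK ha
      _ ≤ x ^ a := by rw [one_mul]; exact Real.rpow_le_rpow_of_nonpos hx h2 ha

lemma lintegral_one_sub_rpow {b s : ℝ} (hb : 0 < b) (hs : s < 1) :
    ∫⁻ r in Set.Ioo s 1, ENNReal.ofReal ((1 - r) ^ (b - 1)) = ENNReal.ofReal ((1 - s) ^ b / b) := by
  have hi : IntervalIntegrable (fun r : ℝ => (1 - r) ^ (b - 1)) volume s 1 := by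
    have h0 : IntervalIntegrable (fun r : ℝ => r ^ (b - 1)) volume (1 - s) (1 - 1) :=
      intervalIntegral.intervalIntegrable_rpow' (by linarith)
    simpa using h0.comp_sub_left 1
  have hv : ∫ r in s..1, (1 - r) ^ (b - 1) = (1 - s) ^ b / b := by
    rw [intervalIntegral.integral_comp_sub_left (fun r => r ^ (b - 1)),
      integral_rpow (Or.inl (by linarith))]
    simp [Real.zero_rpow hb.ne']
  rw [← hv, intervalIntegral.integral_of_le hs.le,
    integral_Ioc_eq_integral_Ioo, ofReal_integral_eq_lintegral_ofReal]
  · exact (hi.1).mono_set Set.Ioo_subset_Ioc_self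
  · refine (ae_restrict_iff' measurableSet_Ioo).2 (ae_of_all _ fun x hx => ?_)
    exact Real.rpow_nonneg (by linarith [hx.2]) _

/-- The integrated form of `|d/dr (1 - r)^κ| = |κ| (1 - r)^(κ-1)`. -/
lemma one_sub_rpow_le {κ s t : ℝ} (hst : s < t) (ht : t < 1) :
    ENNReal.ofReal ((1 - t) ^ κ) ≤ ENNReal.ofReal ((1 - s) ^ κ) +
      ENNReal.ofReal |κ| * ∫⁻ r in Set.Ioo s t, ENNReal.ofReal ((1 - r) ^ (κ - 1)) := by
  have hcont : ContinuousOn (fun r : ℝ => (1 - r) ^ (κ - 1)) (Set.Icc s t) :=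
    ContinuousOn.rpow_const (by fun_prop) fun x hx => Or.inl (by linarith [hx.2])
  have hi : IntervalIntegrable (fun r : ℝ => (1 - r) ^ (κ - 1)) volume s t :=
    ContinuousOn.intervalIntegrable (by rwa [Set.uIcc_of_le hst.le])
  have hnn : ∀ x ∈ Set.Icc s t, 0 ≤ (1 - x) ^ (κ - 1) := fun x hx =>
    Real.rpow_nonneg (by linarith [hx.2]) _
  have hf : ∫ r in s..t, (-κ) * (1 - r) ^ (κ - 1) = (1 - t) ^ κ - (1 - s) ^ κ := by
    refine intervalIntegral.integral_eq_sub_of_hasDerivAt (f := fun r => (1 - r) ^ κ)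
      (fun x hx => ?_) (hi.const_mul _)
    rw [Set.uIcc_of_le hst.le] at hx
    have := ((hasDerivAt_id x).const_sub 1).rpow_const (p := κ) (Or.inl (by
      simp only [id]; linarith [hx.2]))
    exact this.congr_deriv (by simp only [id]; ring)
  rw [intervalIntegral.integral_const_mul] at hf
  have hle : (1 - t) ^ κ ≤ (1 - s) ^ κ + |κ| * ∫ r in s..t, (1 - r) ^ (κ - 1) := by
    have h0 := intervalIntegral.integral_nonneg (μ := volume) hst.le hnn
    nlinarith [neg_abs_le κ, mul_nonneg (by linarith [neg_abs_le κ] : 0 ≤ |κ| + κ) h0]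
  rw [intervalIntegral.integral_of_le hst.le, integral_Ioc_eq_integral_Ioo] at hle
  rw [← ofReal_integral_eq_lintegral_ofReal (hi.1.mono_set Set.Ioo_subset_Ioc_self)
    ((ae_restrict_iff' measurableSet_Ioo).2 (ae_of_all _ fun x hx =>
      hnn x (Set.Ioo_subset_Icc_self hx))), ← ENNReal.ofReal_mul (abs_nonneg _)]
  exact (ENNReal.ofReal_le_ofReal hle).trans ENNReal.ofReal_add_le

/-- Tonelli's theorem on the triangle `s < r < t < 1`. -/
lemma tail_tonelli {v w : ℝ → ENNReal} (hv : Measurable v) (hw : Measurable w) (s : ℝ) :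
    ∫⁻ t in Set.Ioo s 1, w t * ∫⁻ r in Set.Ioo s t, v r =
      ∫⁻ r in Set.Ioo s 1, v r * ∫⁻ t in Set.Ioo r 1, w t := by
  have e1 : ∀ t ∈ Set.Ioo s 1, w t * ∫⁻ r in Set.Ioo s t, v r =
      ∫⁻ r in Set.Ioo s 1, (Set.Iio t).indicator (fun r => v r * w t) r := by
    intro t ht
    rw [lintegral_indicator measurableSet_Iio, Measure.restrict_restrict measurableSet_Iio,
      lintegral_mul_const _ hv, mul_comm]
    congr 3
    ext x; simp only [Set.mem_Ioo, Set.mem_inter_iff, Set.mem_Iio] at *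
    constructor
    · rintro ⟨a, b⟩; exact ⟨b, a, b.trans ht.2⟩
    · rintro ⟨a, b, c⟩; exact ⟨b, a⟩
  have e2 : ∀ r ∈ Set.Ioo s 1, v r * ∫⁻ t in Set.Ioo r 1, w t =
      ∫⁻ t in Set.Ioo s 1, (Set.Iio t).indicator (fun r => v r * w t) r := by
    intro r hr
    have : ∀ t, (Set.Iio t).indicator (fun r => v r * w t) r =
        (Set.Ioi r).indicator (fun t => v r * w t) t := by
      intro t; simp [Set.indicator_apply]
    simp_rw [this]
    rw [lintegral_indicator measurableSet_Ioi, Measure.restrict_restrict measurableSet_Ioi,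
      lintegral_const_mul _ hw]
    congr 3
    ext x; simp only [Set.mem_Ioo, Set.mem_inter_iff, Set.mem_Ioi] at *
    constructor
    · rintro ⟨a, b⟩; exact ⟨a, hr.1.trans a, b⟩
    · rintro ⟨a, b, c⟩; exact ⟨a, c⟩
  rw [setLIntegral_congr_fun measurableSet_Ioo e1, setLIntegral_congr_fun measurableSet_Ioo e2]
  refine lintegral_lintegral_swap (Measurable.aemeasurable ?_)
  have : (Function.uncurry fun (x y : ℝ) => (Set.Iio x).indicator (fun r => v r * w x) y) =
      {q : ℝ × ℝ | q.2 < q.1}.indicator fun q => v q.2 * w q.1 := by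
    ext ⟨a, b⟩; simp [Set.indicator_apply]
  rw [this]
  exact ((hv.comp measurable_snd).mul (hw.comp measurable_fst)).indicator
    (measurableSet_lt measurable_snd measurable_fst)

/-- The tails of the densities `(1 - r)^κ ω` and `(1 - r)^(κ-1) ω̂` are comparable, both being
comparable to `(1 - s)^κ ω̂(s)`. -/
lemma tail_comparable {ω : ℝ → ℝ} (hω : IsWeight ω) (hD : DD ω)
    {C₀ α : ℝ} (hC₀ : 0 < C₀)
    (hub : ∀ r t : ℝ, 0 ≤ r → r ≤ t → t < 1 →
      wh ω t ≤ C₀ * ((1 - t) / (1 - r)) ^ α * wh ω r)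
    {κ : ℝ} (hκ : -α < κ) :
    ∃ C : ℝ, 1 ≤ C ∧ ∀ s ∈ Set.Ico (0:ℝ) 1,
      (∫⁻ r in Set.Ioo s 1, ENNReal.ofReal ((1 - r) ^ (κ - 1)) * tailW ω r ≤
        ENNReal.ofReal C *
          ∫⁻ r in Set.Ioo s 1, ENNReal.ofReal ((1 - r) ^ κ) * ENNReal.ofReal (ω r)) ∧
      (∫⁻ r in Set.Ioo s 1, ENNReal.ofReal ((1 - r) ^ κ) * ENNReal.ofReal (ω r) ≤
        ENNReal.ofReal C *
          ∫⁻ r in Set.Ioo s 1, ENNReal.ofReal ((1 - r) ^ (κ - 1)) * tailW ω r) := by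
  obtain ⟨⟨C₁, hC₁, hD1⟩, C₂, K, hC₂, hK, hD2⟩ := hD
  have hK0 : 0 < K := by linarith
  have hC₂0 : 0 < C₂ := by linarith
  have hb : 0 < κ + α := by linarith
  set M1 : ℝ → ENNReal := fun s =>
    ∫⁻ r in Set.Ioo s 1, ENNReal.ofReal ((1 - r) ^ κ) * ENNReal.ofReal (ω r) with hM1
  set M2 : ℝ → ENNReal := fun s =>
    ∫⁻ r in Set.Ioo s 1, ENNReal.ofReal ((1 - r) ^ (κ - 1)) * tailW ω r with hM2
  set X : ℝ → ENNReal := fun s => ENNReal.ofReal ((1 - s) ^ κ * wh ω s) with hX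
  have hmeas1 : Measurable fun r : ℝ => ENNReal.ofReal ((1 - r) ^ (κ - 1)) := by fun_prop
  have hmeasω : Measurable fun r : ℝ => ENNReal.ofReal (ω r) := hω.2.1.ennreal_ofReal
  -- `M2 ≲ X`: the decay hypothesis bounds `ω̂(r)`, and `(1 - r)^(κ+α-1)` is integrable at `1`.
  have hA : ∀ s ∈ Set.Ico (0:ℝ) 1, M2 s ≤ ENNReal.ofReal (C₀ / (κ + α)) * X s := by
    intro s hs
    have hs1 : 0 < 1 - s := by linarith [hs.2]
    have hw := hω.wh_nonneg hs.1
    calc M2 s ≤ ∫⁻ r in Set.Ioo s 1, ENNReal.ofReal (C₀ * (1 - s) ^ (-α) * wh ω s) *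
          ENNReal.ofReal ((1 - r) ^ (κ + α - 1)) := by
          refine setLIntegral_mono' measurableSet_Ioo fun r hr => ?_
          have hr1 : 0 < 1 - r := by linarith [hr.2]
          rw [← hω.ofReal_wh (hs.1.trans hr.1.le), ← ENNReal.ofReal_mul (by positivity),
            ← ENNReal.ofReal_mul (by positivity)]
          refine ENNReal.ofReal_le_ofReal ?_
          calc (1 - r) ^ (κ - 1) * wh ω r
              ≤ (1 - r) ^ (κ - 1) * (C₀ * ((1 - r) / (1 - s)) ^ α * wh ω s) := by
                gcongr; exact hub s r hs.1 hr.1.le hr.2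
            _ = C₀ * (1 - s) ^ (-α) * wh ω s * (1 - r) ^ (κ + α - 1) := by
                rw [Real.div_rpow hr1.le hs1.le, Real.rpow_neg hs1.le,
                  show κ + α - 1 = (κ - 1) + α by ring, Real.rpow_add hr1]
                field_simp
      _ = ENNReal.ofReal (C₀ / (κ + α)) * X s := by
          rw [lintegral_const_mul _ (by fun_prop), lintegral_one_sub_rpow hb hs.2,
            ← ENNReal.ofReal_mul (by positivity), ← ENNReal.ofReal_mul (by positivity)]
          congr 1
          rw [Real.rpow_neg hs1.le, Real.rpow_add hs1]
          field_simp
  -- `X ≲ M2`: on `(s, (1+s)/2)` the factor `1 - r` is comparable to `1 - s`, and by upper doubling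
  -- `ω̂(r)` to `ω̂(s)`.
  set c2 : ℝ := 2 ^ (-|κ - 1|) / 2 / C₁ with hc2
  have hc2pos : 0 < c2 := by positivity
  have hB : ∀ s ∈ Set.Ico (0:ℝ) 1, ENNReal.ofReal c2 * X s ≤ M2 s := by
    intro s hs
    have hs1 : 0 < 1 - s := by linarith [hs.2]
    have hmid : 0 ≤ wh ω ((1 + s) / 2) := hω.wh_nonneg (by linarith [hs.1])
    calc ENNReal.ofReal c2 * X s
        ≤ ENNReal.ofReal (2 ^ (-|κ - 1|) * (1 - s) ^ (κ - 1)) *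
            ENNReal.ofReal (wh ω ((1 + s) / 2)) * ENNReal.ofReal ((1 + s) / 2 - s) := by
          rw [← ENNReal.ofReal_mul (by positivity), ← ENNReal.ofReal_mul (by positivity),
            ← ENNReal.ofReal_mul (by positivity)]
          refine ENNReal.ofReal_le_ofReal ?_
          have e : (1 - s) ^ κ = (1 - s) ^ (κ - 1) * (1 - s) := by
            rw [← Real.rpow_add_one hs1.ne']; ring_nf
          have hw := hD1 s hs
          calc c2 * ((1 - s) ^ κ * wh ω s) ≤ c2 * ((1 - s) ^ κ * (C₁ * wh ω ((1 + s) / 2))) := by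
                gcongr
            _ = _ := by rw [e, hc2]; field_simp; ring
      _ = ∫⁻ r in Set.Ioo s ((1 + s) / 2), ENNReal.ofReal (2 ^ (-|κ - 1|) * (1 - s) ^ (κ - 1)) *
            ENNReal.ofReal (wh ω ((1 + s) / 2)) := by
          rw [setLIntegral_const, Real.volume_Ioo]
      _ ≤ ∫⁻ r in Set.Ioo s ((1 + s) / 2), ENNReal.ofReal ((1 - r) ^ (κ - 1)) * tailW ω r := by
          refine setLIntegral_mono' measurableSet_Ioo fun r hr => ?_
          refine mul_le_mul' (ENNReal.ofReal_le_ofReal ?_) ?_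
          · exact rpow_ge_of_mem one_le_two hs1 (by linarith [hr.2]) (by linarith [hr.1])
          · rw [hω.ofReal_wh (by linarith [hs.1])]
            exact antitone_tailW ω hr.2.le
      _ ≤ M2 s := lintegral_mono_set (Set.Ioo_subset_Ioo_right (by linarith [hs.2]))
  -- `X ≲ M1`: `ω` has a fixed fraction of its mass on `(s, 1)` in `(s, 1 - (1-s)/K]`.
  set c1 : ℝ := K ^ (-|κ|) * (1 - 1 / C₂) with hc1
  have hC₂' : 0 < 1 - 1 / C₂ := by
    rw [sub_pos, div_lt_one hC₂0]; exact hC₂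
  have hc1pos : 0 < c1 := by positivity
  have hCC : ∀ s ∈ Set.Ico (0:ℝ) 1, ENNReal.ofReal c1 * X s ≤ M1 s := by
    intro s hs
    have hs1 : 0 < 1 - s := by linarith [hs.2]
    set t := 1 - (1 - s) / K with ht
    have hdK : (1 - s) / K < 1 - s := div_lt_self hs1 hK
    have hdK0 : 0 < (1 - s) / K := by positivity
    have hst : s < t := by linarith
    have ht1 : t < 1 := by linarith
    have hsubset : Set.Ioo s 1 ⊆ Set.Ico 0 1 := fun x hx => ⟨hs.1.trans hx.1.le, hx.2⟩
    have hsplit : wh ω s = (∫ r in Set.Ioc s t, ω r) + wh ω t := by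
      rw [wh, wh, ← setIntegral_union]
      · rw [Set.Ioc_union_Ioo_eq_Ioo hst.le ht1]
      · exact Set.disjoint_left.2 fun x hx hx' => absurd hx'.1 (not_lt.2 hx.2)
      · exact measurableSet_Ioo
      · exact hω.2.2.mono_set fun x hx => hsubset ⟨hx.1, hx.2.trans_lt ht1⟩
      · exact hω.2.2.mono_set fun x hx => hsubset ⟨hst.trans hx.1, hx.2⟩
    have hge : (1 - 1 / C₂) * wh ω s ≤ ∫ r in Set.Ioc s t, ω r := by
      have h1 := hD2 s hs
      have h2 : wh ω t ≤ 1 / C₂ * wh ω s := by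
        rw [div_mul_eq_mul_div, one_mul, le_div_iff₀ hC₂0, mul_comm]; exact h1
      linarith
    have hofR : ENNReal.ofReal (∫ r in Set.Ioc s t, ω r) =
        ∫⁻ r in Set.Ioc s t, ENNReal.ofReal (ω r) :=
      ofReal_integral_eq_lintegral_ofReal
        (hω.2.2.mono_set fun x hx => hsubset ⟨hx.1, hx.2.trans_lt ht1⟩)
        ((ae_restrict_iff' measurableSet_Ioc).2 (ae_of_all _ fun x hx =>
          hω.1 x (hsubset ⟨hx.1, hx.2.trans_lt ht1⟩)))
    calc ENNReal.ofReal c1 * X s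
        ≤ ENNReal.ofReal (K ^ (-|κ|) * (1 - s) ^ κ) * ENNReal.ofReal (∫ r in Set.Ioc s t, ω r) := by
          rw [← ENNReal.ofReal_mul (by positivity), ← ENNReal.ofReal_mul (by positivity)]
          refine ENNReal.ofReal_le_ofReal ?_
          calc c1 * ((1 - s) ^ κ * wh ω s)
              = K ^ (-|κ|) * (1 - s) ^ κ * ((1 - 1 / C₂) * wh ω s) := by rw [hc1]; ring
            _ ≤ _ := by gcongr
      _ = ∫⁻ r in Set.Ioc s t, ENNReal.ofReal (K ^ (-|κ|) * (1 - s) ^ κ) *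
            ENNReal.ofReal (ω r) := by
          rw [hofR, lintegral_const_mul _ hmeasω]
      _ ≤ ∫⁻ r in Set.Ioc s t, ENNReal.ofReal ((1 - r) ^ κ) * ENNReal.ofReal (ω r) := by
          refine setLIntegral_mono' measurableSet_Ioc fun r hr => ?_
          refine mul_le_mul' (ENNReal.ofReal_le_ofReal ?_) le_rfl
          exact rpow_ge_of_mem hK.le hs1 (by linarith [hr.2]) (by linarith [hr.1])
      _ ≤ M1 s := lintegral_mono_set fun x hx => ⟨hx.1, hx.2.trans_lt ht1⟩
  -- `M1 ≤ X + |κ| M2`: integration by parts, written with Tonelli's theorem.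
  have hE : ∀ s ∈ Set.Ico (0:ℝ) 1, M1 s ≤ X s + ENNReal.ofReal |κ| * M2 s := by
    intro s hs
    have hs1 : 0 < 1 - s := by linarith [hs.2]
    calc M1 s ≤ ∫⁻ t in Set.Ioo s 1, (ENNReal.ofReal ((1 - s) ^ κ) * ENNReal.ofReal (ω t) +
          ENNReal.ofReal |κ| * (ENNReal.ofReal (ω t) *
            ∫⁻ r in Set.Ioo s t, ENNReal.ofReal ((1 - r) ^ (κ - 1)))) := by
          refine setLIntegral_mono' measurableSet_Ioo fun t ht => ?_
          refine (mul_le_mul' (one_sub_rpow_le (κ := κ) ht.1 ht.2) le_rfl).trans (le_of_eq ?_)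
          ring
      _ = X s + ENNReal.ofReal |κ| * M2 s := by
          rw [lintegral_add_left (hmeasω.const_mul _), lintegral_const_mul _ hmeasω,
            lintegral_const_mul' _ _ ENNReal.ofReal_ne_top, tail_tonelli hmeas1 hmeasω, hX]
          simp only
          rw [ENNReal.ofReal_mul (by positivity), hω.ofReal_wh hs.1]
          rfl
  have hinv : ∀ {c : ℝ} {x y : ENNReal}, 0 < c → ENNReal.ofReal c * x ≤ y →
      x ≤ ENNReal.ofReal c⁻¹ * y := by
    intro c x y hc h
    calc x = ENNReal.ofReal c⁻¹ * (ENNReal.ofReal c * x) := by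
          rw [← mul_assoc, ← ENNReal.ofReal_mul (by positivity), inv_mul_cancel₀ hc.ne']; simp
      _ ≤ _ := by gcongr
  refine ⟨max 1 (max (C₀ / (κ + α) * c1⁻¹) (c2⁻¹ + |κ|)), le_max_left _ _, fun s hs => ⟨?_, ?_⟩⟩
  · calc M2 s ≤ ENNReal.ofReal (C₀ / (κ + α)) * (ENNReal.ofReal c1⁻¹ * M1 s) :=
          (hA s hs).trans (by gcongr; exact hinv hc1pos (hCC s hs))
      _ = ENNReal.ofReal (C₀ / (κ + α) * c1⁻¹) * M1 s := by
          rw [ENNReal.ofReal_mul (by positivity), mul_assoc]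
      _ ≤ _ := by
          gcongr
          exact (le_max_left _ _).trans (le_max_right _ _)
  · calc M1 s ≤ ENNReal.ofReal c2⁻¹ * M2 s + ENNReal.ofReal |κ| * M2 s :=
          (hE s hs).trans (by gcongr; exact hinv hc2pos (hB s hs))
      _ = ENNReal.ofReal (c2⁻¹ + |κ|) * M2 s := by
          rw [ENNReal.ofReal_add (by positivity) (abs_nonneg _), add_mul]
      _ ≤ _ := by
          gcongr
          exact (le_max_right _ _).trans (le_max_right _ _)

/-! ### Radially weighted integrals over the ball -/

/-- Integration in polar coordinates for the lower Lebesgue integral. -/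
lemma lintegral_polar {E : Type*} [NormedAddCommGroup E] [NormedSpace ℝ E] [FiniteDimensional ℝ E]
    [Nontrivial E] [MeasurableSpace E] [BorelSpace E] (μ : Measure E) [μ.IsAddHaarMeasure]
    {G : E → ENNReal} (hG : Measurable G) :
    ∫⁻ z, G z ∂μ = ∫⁻ ζ : sphere (0 : E) 1, (∫⁻ r in Set.Ioi (0:ℝ),
      ENNReal.ofReal (r ^ (Module.finrank ℝ E - 1)) * G (r • (ζ : E))) ∂μ.toSphere := by
  have hG' : Measurable fun q : sphere (0 : E) 1 × Set.Ioi (0:ℝ) => G ((q.2 : ℝ) • (q.1 : E)) := by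
    fun_prop
  have hmp := μ.measurePreserving_homeomorphUnitSphereProd
  have h1 := hmp.lintegral_comp hG'
  rw [lintegral_prod _ hG'.aemeasurable] at h1
  calc ∫⁻ z, G z ∂μ = ∫⁻ z in ({0}ᶜ : Set E), G z ∂μ := by
        rw [restrict_compl_singleton (μ := μ) 0]
    _ = ∫⁻ z : ({0}ᶜ : Set E), G z ∂(μ.comap Subtype.val) :=
        (lintegral_subtype_comap (measurableSet_singleton _).compl _).symm
    _ = _ := by
        rw [← lintegral_congr fun z => ?_] at h1
        · rw [h1]
          refine lintegral_congr fun ζ => ?_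
          rw [Measure.volumeIoiPow, lintegral_withDensity_eq_lintegral_mul _ (by fun_prop) (by fun_prop)]
          exact lintegral_subtype_comap measurableSet_Ioi
            (fun r : ℝ => ENNReal.ofReal (r ^ (Module.finrank ℝ E - 1)) * G (r • (ζ : E)))
        · have hz : (z : E) ≠ 0 := z.2
          simp [smul_smul, hz]

/-- Lebesgue measure on `ℂⁿ` is invariant under `z ↦ e^{iθ} z`. -/
lemma lintegral_rotate {n : ℕ} (G : En n → ENNReal) (θ : ℝ) :
    ∫⁻ z, G (circleMap 0 1 θ • z) = ∫⁻ z, G z := by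
  have hc : ‖circleMap 0 1 θ‖ = 1 := by simp
  have hc0 : circleMap 0 1 θ ≠ 0 := by rw [← norm_pos_iff, hc]; exact one_pos
  let e : En n ≃ₗᵢ[ℝ] En n :=
    { toFun := fun z => circleMap 0 1 θ • z
      invFun := fun z => (circleMap 0 1 θ)⁻¹ • z
      map_add' := fun x y => smul_add _ _ _
      map_smul' := fun r x => smul_comm _ _ _
      left_inv := fun z => inv_smul_smul₀ hc0 z
      right_inv := fun z => smul_inv_smul₀ hc0 z
      norm_map' := fun z => by
        change ‖circleMap 0 1 θ • z‖ = ‖z‖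
        rw [norm_smul, hc, one_mul] }
  exact e.measurePreserving.lintegral_comp_emb e.toHomeomorph.measurableEmbedding G

/-- Polar coordinates combined with averaging over the rotations `z ↦ e^{iθ} z`: a radially weighted
integral of `|f|^p` is an integral of circle means of `|f|^p` on the complex lines through `0`. -/
lemma lintegral_ball_eq {n : ℕ} (hn : 1 ≤ n) {p : ℝ} (hp : 0 < p) {f : En n → ℂ}
    (hf : DifferentiableOn ℂ f (Bl n)) {g : ℝ → ENNReal} (hg : Measurable g) :
    ENNReal.ofReal (2 * Real.pi) * ∫⁻ z in Bl n, ENNReal.ofReal (‖f z‖ ^ p) * g ‖z‖ =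
      ∫⁻ ζ : sphere (0 : En n) 1, (∫⁻ r in Set.Ioo (0:ℝ) 1, g r * ENNReal.ofReal
        (r ^ (Module.finrank ℝ (En n) - 1) * (2 * Real.pi *
          Real.circleAverage (fun w => ‖f (w • (ζ : En n))‖ ^ p) 0 r)))
        ∂(volume : Measure (En n)).toSphere := by
  classical
  have : Nonempty (Fin n) := ⟨⟨0, hn⟩⟩
  have : Nontrivial (En n) := inferInstance
  have hpi := Real.pi_pos
  have hBm : MeasurableSet (Bl n) := measurableSet_ball
  have hcf : ContinuousOn (fun z => ‖f z‖ ^ p) (Bl n) :=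
    hf.continuousOn.norm.rpow_const fun _ _ => Or.inr hp.le
  set F : En n → ENNReal := (Bl n).indicator fun z => ENNReal.ofReal (‖f z‖ ^ p) with hF
  have hFm : Measurable F := by
    have hc : ContinuousOn (fun z => ENNReal.ofReal (‖f z‖ ^ p)) (Bl n) :=
      ENNReal.continuous_ofReal.comp_continuousOn hcf
    rw [hF, ← Set.piecewise_eq_indicator]
    exact hc.measurable_piecewise continuousOn_const hBm
  have hcm : Continuous fun θ : ℝ => circleMap 0 1 θ := continuous_circleMap 0 1
  have hjoint : Measurable fun q : En n × ℝ => F (circleMap 0 1 q.2 • q.1) * g ‖q.1‖ := by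
    have : Continuous fun q : En n × ℝ => circleMap 0 1 q.2 • q.1 := by fun_prop
    exact (hFm.comp this.measurable).mul (hg.comp measurable_fst.norm)
  have h1 : ∫⁻ z in Bl n, ENNReal.ofReal (‖f z‖ ^ p) * g ‖z‖ = ∫⁻ z, F z * g ‖z‖ := by
    rw [← lintegral_indicator hBm]
    refine lintegral_congr fun z => ?_
    by_cases hz : z ∈ Bl n <;> simp [hF, hz]
  have h2 (θ : ℝ) : ∫⁻ z, F (circleMap 0 1 θ • z) * g ‖z‖ = ∫⁻ z, F z * g ‖z‖ := by
    rw [← lintegral_rotate (fun z => F z * g ‖z‖) θ]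
    refine lintegral_congr fun z => ?_
    simp [norm_smul]
  have h3 : ENNReal.ofReal (2 * Real.pi) * ∫⁻ z, F z * g ‖z‖ =
      ∫⁻ z, (∫⁻ θ in Set.Ioc 0 (2 * Real.pi), F (circleMap 0 1 θ • z)) * g ‖z‖ := by
    calc _ = ∫⁻ θ in Set.Ioc 0 (2 * Real.pi), ∫⁻ z, F (circleMap 0 1 θ • z) * g ‖z‖ := by
          simp_rw [h2]
          rw [setLIntegral_const, Real.volume_Ioc, sub_zero, mul_comm]
      _ = ∫⁻ z, ∫⁻ θ in Set.Ioc 0 (2 * Real.pi), F (circleMap 0 1 θ • z) * g ‖z‖ :=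
          lintegral_lintegral_swap (hjoint.comp measurable_swap).aemeasurable
      _ = _ := by
          refine lintegral_congr fun z => lintegral_mul_const _ ?_
          have : Continuous fun θ : ℝ => circleMap 0 1 θ • z := by fun_prop
          exact hFm.comp this.measurable
  have hGm : Measurable fun z : En n =>
      (∫⁻ θ in Set.Ioc 0 (2 * Real.pi), F (circleMap 0 1 θ • z)) * g ‖z‖ := by
    refine Measurable.mul ?_ (hg.comp measurable_norm)
    have : Continuous fun q : En n × ℝ => circleMap 0 1 q.2 • q.1 := by fun_prop
    exact (hFm.comp this.measurable).lintegral_prod_right'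
  rw [h1, h3, lintegral_polar volume hGm]
  refine lintegral_congr fun ζ => ?_
  have hζ : ‖(ζ : En n)‖ = 1 := by simp
  rw [← lintegral_indicator measurableSet_Ioi, ← lintegral_indicator measurableSet_Ioo]
  refine lintegral_congr fun r => ?_
  rcases le_or_gt r 0 with hr0 | hr0
  · simp [hr0]
  rw [Set.indicator_of_mem (show r ∈ Set.Ioi (0:ℝ) from hr0)]
  have hnr : ‖r • (ζ : En n)‖ = r := by rw [norm_smul, hζ, mul_one, Real.norm_of_nonneg hr0.le]
  have hmem (θ : ℝ) : circleMap 0 1 θ • r • (ζ : En n) ∈ Bl n ↔ r < 1 := by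
    rw [Bl, mem_ball_zero_iff, norm_smul, hnr]
    simp
  rcases le_or_gt 1 r with hr1 | hr1
  · rw [Set.indicator_of_notMem (by simp [hr1])]
    have : ∀ θ, F (circleMap 0 1 θ • r • (ζ : En n)) = 0 := fun θ =>
      Set.indicator_of_notMem (by rw [hmem]; exact hr1.not_gt) _
    simp [this]
  rw [Set.indicator_of_mem (show r ∈ Set.Ioo (0:ℝ) 1 from ⟨hr0, hr1⟩), hnr]
  have hsm (θ : ℝ) : circleMap 0 1 θ • r • (ζ : En n) = circleMap 0 r θ • (ζ : En n) := by
    ext i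
    simp [circleMap]
    ring
  have hcθ : Continuous fun θ : ℝ => ‖f (circleMap 0 r θ • (ζ : En n))‖ ^ p := by
    have hc : Continuous fun θ : ℝ => circleMap 0 r θ • (ζ : En n) :=
      (continuous_circleMap 0 r).smul continuous_const
    refine hcf.comp_continuous hc fun θ => ?_
    rw [← hsm, hmem]
    exact hr1
  have hin : ∫⁻ θ in Set.Ioc 0 (2 * Real.pi), F (circleMap 0 1 θ • r • (ζ : En n)) =
      ENNReal.ofReal (2 * Real.pi *
          Real.circleAverage (fun w => ‖f (w • (ζ : En n))‖ ^ p) 0 r) := by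
    rw [Real.circleAverage, smul_eq_mul, mul_inv_cancel_left₀ (by positivity),
      intervalIntegral.integral_of_le (by positivity),
      ofReal_integral_eq_lintegral_ofReal
        (hcθ.integrableOn_Ioc) (Eventually.of_forall fun θ => by positivity)]
    refine lintegral_congr fun θ => ?_
    rw [hF, Set.indicator_of_mem ((hmem θ).2 hr1), hsm]
  have hrp : 0 ≤ r ^ (Module.finrank ℝ (En n) - 1) := by positivity
  rw [hin, ENNReal.ofReal_mul hrp]
  ring

/-- Tail domination of radial densities implies domination of the integrals of `|f|^p` against
them. -/
lemma lintegral_ball_le {n : ℕ} (hn : 1 ≤ n) {p : ℝ} (hp : 0 < p) {f : En n → ℂ}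
    (hf : DifferentiableOn ℂ f (Bl n)) {g₁ g₂ : ℝ → ENNReal} (hg₁ : Measurable g₁)
    (hg₂ : Measurable g₂) {C : ENNReal} (hC : C ≠ ⊤)
    (hg : ∀ s ∈ Set.Ico (0:ℝ) 1, ∫⁻ r in Set.Ioo s 1, g₁ r ≤ C * ∫⁻ r in Set.Ioo s 1, g₂ r) :
    ∫⁻ z in Bl n, ENNReal.ofReal (‖f z‖ ^ p) * g₁ ‖z‖ ≤
      C * ∫⁻ z in Bl n, ENNReal.ofReal (‖f z‖ ^ p) * g₂ ‖z‖ := by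
  have hpi := Real.pi_pos
  have h0 : ENNReal.ofReal (2 * Real.pi) ≠ 0 := by simp [hpi]
  rw [← ENNReal.mul_le_mul_iff_right h0 ENNReal.ofReal_ne_top, mul_left_comm,
    lintegral_ball_eq hn hp hf hg₁, lintegral_ball_eq hn hp hf hg₂,
    ← lintegral_const_mul' _ _ hC]
  refine lintegral_mono fun ζ => ?_
  have hζ : ‖(ζ : En n)‖ = 1 := by simp
  have hnn (r : ℝ) : 0 ≤ Real.circleAverage (fun w => ‖f (w • (ζ : En n))‖ ^ p) 0 r :=
    Real.circleAverage_nonneg_of_nonneg fun w _ => by positivity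
  have hh : DifferentiableOn ℂ (fun w : ℂ => f (w • (ζ : En n))) (ball 0 1) := by
    refine hf.comp (by fun_prop) fun w hw => ?_
    rw [Bl, mem_ball_zero_iff, norm_smul, hζ, mul_one]
    simpa using hw
  refine setLIntegral_le_of_mono_tail hg (fun r hr => ?_) (fun r hr s hs hrs => ?_) hC hg₁ hg₂
  · have := hr.1
    have := hnn r
    positivity
  · have := hr.1
    have := hnn r
    have h := circleAverage_norm_rpow_mono hp hh hr.1.le hrs hs.2
    have hs0 : 0 ≤ s := hs.1.le
    gcongr

theorem stmt_3 (n : ℕ) (hn : 1 ≤ n) (p : ℝ) (hp : 0 < p)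
    (ω : ℝ → ℝ) (hω : IsWeight ω) (hD : DD ω)
    (C₀ α : ℝ) (hC₀ : 0 < C₀) (hα : 0 < α)
    (hub : ∀ r t : ℝ, 0 ≤ r → r ≤ t → t < 1 →
      wh ω t ≤ C₀ * ((1 - t) / (1 - r)) ^ α * wh ω r)
    (κ : ℝ) (hκ : -α < κ) :
    ∃ C : ℝ, 1 ≤ C ∧ ∀ f : En n → ℂ, DifferentiableOn ℂ f (Bl n) →
      (ENNReal.ofReal C)⁻¹ *
          (∫⁻ z in Bl n,
            ENNReal.ofReal (‖f z‖ ^ p * (1 - ‖z‖) ^ (κ - 1) * wh ω ‖z‖) ∂(nV n))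
        ≤ (∫⁻ z in Bl n,
            ENNReal.ofReal (‖f z‖ ^ p * (1 - ‖z‖) ^ κ * ω ‖z‖) ∂(nV n)) ∧
      (∫⁻ z in Bl n,
          ENNReal.ofReal (‖f z‖ ^ p * (1 - ‖z‖) ^ κ * ω ‖z‖) ∂(nV n))
        ≤ ENNReal.ofReal C *
          (∫⁻ z in Bl n,
            ENNReal.ofReal (‖f z‖ ^ p * (1 - ‖z‖) ^ (κ - 1) * wh ω ‖z‖) ∂(nV n)) := by
  obtain ⟨C, hC1, hC⟩ := tail_comparable hω hD hC₀ hub hκ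
  have hC0 : ENNReal.ofReal C ≠ 0 := by
    simpa using lt_of_lt_of_le one_pos hC1
  have hg₁ : Measurable fun r : ℝ => ENNReal.ofReal ((1 - r) ^ κ) * ENNReal.ofReal (ω r) :=
    Measurable.mul (by fun_prop) hω.2.1.ennreal_ofReal
  have hg₂ : Measurable fun r : ℝ => ENNReal.ofReal ((1 - r) ^ (κ - 1)) * tailW ω r :=
    Measurable.mul (by fun_prop) (antitone_tailW ω).measurable
  refine ⟨C, hC1, fun f hf => ?_⟩
  have hBm : MeasurableSet (Bl n) := measurableSet_ball
  have e₁ : ∫⁻ z in Bl n, ENNReal.ofReal (‖f z‖ ^ p * (1 - ‖z‖) ^ κ * ω ‖z‖) =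
      ∫⁻ z in Bl n, ENNReal.ofReal (‖f z‖ ^ p) *
        (ENNReal.ofReal ((1 - ‖z‖) ^ κ) * ENNReal.ofReal (ω ‖z‖)) := by
    refine setLIntegral_congr_fun hBm fun z hz => ?_
    have hz1 : 0 < 1 - ‖z‖ := sub_pos.2 (mem_ball_zero_iff.1 hz)
    rw [ENNReal.ofReal_mul (by positivity), ENNReal.ofReal_mul (by positivity), mul_assoc]
  have e₂ : ∫⁻ z in Bl n, ENNReal.ofReal (‖f z‖ ^ p * (1 - ‖z‖) ^ (κ - 1) * wh ω ‖z‖) =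
      ∫⁻ z in Bl n, ENNReal.ofReal (‖f z‖ ^ p) *
        (ENNReal.ofReal ((1 - ‖z‖) ^ (κ - 1)) * tailW ω ‖z‖) := by
    refine setLIntegral_congr_fun hBm fun z hz => ?_
    have hz1 : 0 < 1 - ‖z‖ := sub_pos.2 (mem_ball_zero_iff.1 hz)
    rw [ENNReal.ofReal_mul (by positivity), ENNReal.ofReal_mul (by positivity),
      hω.ofReal_wh (norm_nonneg z), mul_assoc]
  have h₁ := lintegral_ball_le hn hp hf hg₁ hg₂ ENNReal.ofReal_ne_top fun s hs => (hC s hs).2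
  have h₂ := lintegral_ball_le hn hp hf hg₂ hg₁ ENNReal.ofReal_ne_top fun s hs => (hC s hs).1
  simp only [nV, Measure.restrict_smul, lintegral_smul_measure, smul_eq_mul]
  rw [e₁, e₂]
  constructor
  · rw [ENNReal.inv_mul_le_iff hC0 ENNReal.ofReal_ne_top, mul_left_comm]
    exact mul_le_mul_right h₂ _
  · rw [mul_left_comm]
    exact mul_le_mul_right h₁ _
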